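/- arXiv:1902.06591 — 2 statements merged into one kernel-verified Lean document; each statement's English description precedes it below -/
import Mathlib

section
/- Track-back lemma: let γ ∈ G* be a guided configuration, let γ' ∈ N(γ), and suppose γ' →_δ γ'₂ for some δ ∈ D* and γ'₂ ∈ G*. Then there exists γ₂ ∈ G* such that γ →_δ γ₂ and γ'₂ ∈ N(γ₂). -/
/-!
The null closure of `γ` has a letterwise description (`NullExp`): its members are obtained by
independently keeping each letter of `γ` or, for a letter that is a state, replacing it by a
transition sequence that nulls it. Replacements never create states, so iterating them gives
nothing more (`NullExp.replace`).

With this description a single step out of an expansion `γ'` can be traced back to `γ`. Since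
a nulling sequence is nonempty, a state at the head of `γ'` is a kept letter of `γ`, and the same
step applies there. If instead the step executes a block `η` en bloc, then the block ends at a
letter boundary of `γ`, because what follows it in `γ'` does not begin with a transition.
So `η` is the expansion of a prefix of `γ`, in which maximal runs of transitions are executed
en bloc and each state in between is nulled by ordinary steps (`NullExp.block`). Induction on
the number of steps finishes the argument.
-/

/-- Transitions of a recursive transition network over states `S`,
terminal alphabet `A`, and production labels `P`. -/
inductive Tr (S A P : Type) : Type where
  | shift (s : S) (a : A) (t : S)
  | call (s u t : S)
  | reduce (s : S) (p : P)

variable {S A P : Type}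

/-- A transition is a shift transition. -/
def Tr.isShift : Tr S A P → Prop
  | .shift _ _ _ => True
  | _ => False

/-- One-step reachability induced by a single transition on configurations (words over `S`). -/
inductive Step : Tr S A P → List S → List S → Prop where
  | shift (s : S) (a : A) (t : S) (σ : List S) :
      Step (Tr.shift s a t) (s :: σ) (t :: σ)
  | call (s u t : S) (σ : List S) :
      Step (Tr.call s u t) (s :: σ) (u :: t :: σ)
  | reduce (s : S) (p : P) (σ : List S) :
      Step (Tr.reduce s p) (s :: σ) σ

/-- Reachability along a sequence of transitions, all belonging to `D`. -/
inductive Reach (D : Set (Tr S A P)) : List (Tr S A P) → List S → List S → Prop where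
  | nil (σ : List S) : Reach D [] σ σ
  | cons {d : Tr S A P} {δ : List (Tr S A P)} {σ σ' σ'' : List S} :
      d ∈ D → Step d σ σ' → Reach D δ σ' σ'' → Reach D (d :: δ) σ σ''

/-- `η` consists of non-shift transitions (membership in `D` is enforced by `Reach`). -/
def EpsSeq (η : List (Tr S A P)) : Prop := ∀ d ∈ η, ¬ d.isShift

/-- Guided configuration symbols: states or (non-shift) guiding transitions. -/
abbrev GSym (S A P : Type) := S ⊕ Tr S A P

/-- `η ∈ D_ε*`, with membership in `D` explicit. -/
def EpsTr (D : Set (Tr S A P)) (η : List (Tr S A P)) : Prop :=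
  ∀ d ∈ η, d ∈ D ∧ ¬ d.isShift

/-- The guided configuration does not begin with a (guiding) transition. -/
def notGuidedHead : List (GSym S A P) → Prop
  | Sum.inr _ :: _ => False
  | _ => True

/-- One-step reachability on guided configurations: the three transition rules act
when the first letter is a state, and a nonempty prefix block of guiding transitions
is executed en bloc (as a single step labelled by the block), provided what follows
does not begin with a transition. -/
inductive GStep (D : Set (Tr S A P)) :
    List (Tr S A P) → List (GSym S A P) → List (GSym S A P) → Prop where
  | shift {s : S} {a : A} {t : S} {γ : List (GSym S A P)} : Tr.shift s a t ∈ D →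
      GStep D [Tr.shift s a t] (Sum.inl s :: γ) (Sum.inl t :: γ)
  | call {s u t : S} {γ : List (GSym S A P)} : Tr.call s u t ∈ D →
      GStep D [Tr.call s u t] (Sum.inl s :: γ) (Sum.inl u :: Sum.inl t :: γ)
  | reduce {s : S} {p : P} {γ : List (GSym S A P)} : Tr.reduce s p ∈ D →
      GStep D [Tr.reduce s p] (Sum.inl s :: γ) γ
  | block {η : List (Tr S A P)} {γ : List (GSym S A P)} :
      η ≠ [] → EpsTr D η → notGuidedHead γ →
      GStep D η (η.map Sum.inr ++ γ) γ

/-- `γ →_δ γ'` on guided configurations: a sequence of guided steps whose labels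
concatenate to `δ`. -/
inductive GReach (D : Set (Tr S A P)) :
    List (Tr S A P) → List (GSym S A P) → List (GSym S A P) → Prop where
  | nil (γ : List (GSym S A P)) : GReach D [] γ γ
  | step {δ₁ δ₂ : List (Tr S A P)} {γ γ' γ'' : List (GSym S A P)} :
      GStep D δ₁ γ γ' → GReach D δ₂ γ' γ'' → GReach D (δ₁ ++ δ₂) γ γ''

/-- A set of guided words closed under replacing a state `s` that nulls via
`η ∈ D_ε*` (in the ordinary configuration semantics) by `η`. -/
def WordClosed (D : Set (Tr S A P)) (T : Set (List (GSym S A P))) : Prop :=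
  ∀ (γ₁ : List (GSym S A P)) (s : S) (γ₂ : List (GSym S A P)) (η : List (Tr S A P)),
    EpsSeq η → Reach D η [s] [] →
    γ₁ ++ Sum.inl s :: γ₂ ∈ T → γ₁ ++ η.map Sum.inr ++ γ₂ ∈ T

/-- The null closure of a single guided word: the smallest such closed set containing it. -/
def NCloWord (D : Set (Tr S A P)) (γ : List (GSym S A P)) : Set (List (GSym S A P)) :=
  ⋂₀ {T | γ ∈ T ∧ WordClosed D T}

/-- Letterwise null expansion: `NullExp D γ γ'` says that `γ'` arises from `γ` by replacing some
of its states by transition sequences nulling them, leaving the other letters alone. -/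
inductive NullExp (D : Set (Tr S A P)) : List (GSym S A P) → List (GSym S A P) → Prop where
  | nil : NullExp D [] []
  | keep (x : GSym S A P) {γ γ' : List (GSym S A P)} :
      NullExp D γ γ' → NullExp D (x :: γ) (x :: γ')
  | null {s : S} {η : List (Tr S A P)} {γ γ' : List (GSym S A P)} :
      EpsSeq η → Reach D η [s] [] → NullExp D γ γ' →
      NullExp D (Sum.inl s :: γ) (η.map Sum.inr ++ γ')

theorem NullExp.refl (D : Set (Tr S A P)) (γ : List (GSym S A P)) : NullExp D γ γ := by
  induction γ with
  | nil => exact .nil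
  | cons x γ ih => exact .keep x ih

/-- A state of a word beginning with a block of transitions occurs after that whole block. -/
theorem map_inr_append_eq_state {η : List (Tr S A P)} {γ' γ₁ γ₂ : List (GSym S A P)} {s : S}
    (h : η.map Sum.inr ++ γ' = γ₁ ++ Sum.inl s :: γ₂) :
    ∃ γ₃, γ₁ = η.map Sum.inr ++ γ₃ ∧ γ' = γ₃ ++ Sum.inl s :: γ₂ := by
  induction η generalizing γ₁ with
  | nil => exact ⟨γ₁, by simp, by simpa using h⟩
  | cons d η ih =>
    cases γ₁ with
    | nil => simp at h
    | cons x γ₁ =>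
      simp only [List.map_cons, List.cons_append, List.cons.injEq] at h
      obtain ⟨rfl, h⟩ := h
      obtain ⟨γ₃, rfl, h3⟩ := ih h
      exact ⟨γ₃, by simp, h3⟩

theorem NullExp.replace {D : Set (Tr S A P)} {γ γ' : List (GSym S A P)} (h : NullExp D γ γ')
    {γ₁ γ₂ : List (GSym S A P)} {s : S} {η : List (Tr S A P)}
    (he : EpsSeq η) (hr : Reach D η [s] []) (hs : γ' = γ₁ ++ Sum.inl s :: γ₂) :
    NullExp D γ (γ₁ ++ η.map Sum.inr ++ γ₂) := by
  induction h generalizing γ₁ with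
  | nil => simp at hs
  | keep x h ih =>
    cases γ₁ with
    | nil =>
      simp only [List.nil_append, List.cons.injEq] at hs
      obtain ⟨rfl, rfl⟩ := hs
      exact .null he hr h
    | cons y γ₁ =>
      simp only [List.cons_append, List.cons.injEq] at hs
      obtain ⟨rfl, hs⟩ := hs
      exact .keep _ (ih hs)
  | null he' hr' _ ih =>
    obtain ⟨γ₃, rfl, h3⟩ := map_inr_append_eq_state hs
    simpa using NullExp.null he' hr' (ih h3)

/-- A word-closed set is closed under null expansion behind any fixed prefix `p`. -/
theorem NullExp.mem_of_wordClosed {D : Set (Tr S A P)} {T : Set (List (GSym S A P))}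
    (hT : WordClosed D T) {γ γ' : List (GSym S A P)} (h : NullExp D γ γ')
    (p : List (GSym S A P)) (hp : p ++ γ ∈ T) : p ++ γ' ∈ T := by
  induction h generalizing p with
  | nil => exact hp
  | keep x _ ih => simpa using ih (p ++ [x]) (by simpa using hp)
  | null he hr _ ih => simpa using ih _ (hT _ _ _ _ he hr hp)

theorem mem_nCloWord_iff {D : Set (Tr S A P)} {γ γ' : List (GSym S A P)} :
    γ' ∈ NCloWord D γ ↔ NullExp D γ γ' := by
  constructor
  · intro h
    exact h {γ' | NullExp D γ γ'} ⟨.refl D γ, fun _ _ _ _ he hr h => h.replace he hr rfl⟩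
  · rintro h T ⟨hγ, hT⟩
    exact h.mem_of_wordClosed hT [] hγ

theorem GReach.trans {D : Set (Tr S A P)} {δ₁ δ₂ : List (Tr S A P)}
    {γ₁ γ₂ γ₃ : List (GSym S A P)} (h₁ : GReach D δ₁ γ₁ γ₂) (h₂ : GReach D δ₂ γ₂ γ₃) :
    GReach D (δ₁ ++ δ₂) γ₁ γ₃ := by
  induction h₁ with
  | nil => exact h₂
  | step hs _ ih => rw [List.append_assoc]; exact .step hs (ih h₂)

theorem GStep.reach {D : Set (Tr S A P)} {δ : List (Tr S A P)}
    {γ γ' : List (GSym S A P)} (h : GStep D δ γ γ') : GReach D δ γ γ' := by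
  simpa using GReach.step h (.nil _)

/-- A possibly empty block of transitions can be executed before a word not starting with one. -/
theorem GReach.block {D : Set (Tr S A P)} {β : List (Tr S A P)} {γ : List (GSym S A P)}
    (hβ : EpsTr D β) (hγ : notGuidedHead γ) : GReach D β (β.map Sum.inr ++ γ) γ := by
  by_cases h : β = []
  · subst h; exact .nil γ
  · exact (GStep.block h hβ hγ).reach

/-- Ordinary runs lift to guided configurations, above an arbitrary guided remainder. -/
theorem Reach.lift {D : Set (Tr S A P)} {η : List (Tr S A P)} {σ τ : List S}
    (h : Reach D η σ τ) (γ : List (GSym S A P)) :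
    GReach D η (σ.map Sum.inl ++ γ) (τ.map Sum.inl ++ γ) := by
  induction h with
  | nil => exact .nil _
  | cons hd hs _ ih =>
    cases hs with
    | shift => exact .step (.shift hd) ih
    | call => exact .step (.call hd) ih
    | reduce => exact .step (.reduce hd) ih

/-- If a word begins with `θ`, then `θ` is a prefix of the maximal transition block `η` with which
the word begins. -/
theorem block_split {θ η : List (Tr S A P)} {γ' γ'' : List (GSym S A P)}
    (hγ : notGuidedHead γ'')
    (h : θ.map Sum.inr ++ γ' = η.map Sum.inr ++ γ'') :
    ∃ η', η = θ ++ η' ∧ γ' = η'.map Sum.inr ++ γ'' := by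
  induction θ generalizing η with
  | nil => exact ⟨η, rfl, h⟩
  | cons d θ ih =>
    cases η with
    | nil =>
      simp only [List.map_cons, List.cons_append, List.map_nil, List.nil_append] at h
      subst h
      exact hγ.elim
    | cons e η =>
      simp only [List.map_cons, List.cons_append, List.cons.injEq, Sum.inr.injEq] at h
      obtain ⟨rfl, h⟩ := h
      obtain ⟨η', rfl, hrest⟩ := ih h
      exact ⟨η', rfl, hrest⟩

/-- Tracking a block execution back. The accumulator `β` holds the transitions of `γ` already read
but not yet executed: they can only be executed once the whole maximal run has been collected. -/
theorem NullExp.block {D : Set (Tr S A P)} {γ ω : List (GSym S A P)} (h : NullExp D γ ω)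
    {β η : List (Tr S A P)} {γ'' : List (GSym S A P)} (hβ : EpsTr D β) (hη : EpsTr D η)
    (hγ : notGuidedHead γ'') (hω : ω = η.map Sum.inr ++ γ'') :
    ∃ γ₂, GReach D (β ++ η) (β.map Sum.inr ++ γ) γ₂ ∧ NullExp D γ₂ γ'' := by
  induction h generalizing β η with
  | nil =>
    obtain ⟨h₁, rfl⟩ := List.append_eq_nil_iff.1 hω.symm
    obtain rfl := List.map_eq_nil_iff.1 h₁
    exact ⟨[], by simpa using GReach.block hβ hγ, .nil⟩
  | @keep x γ γ' h ih =>
    cases x with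
    | inl s =>
      cases η with
      | nil =>
        obtain rfl : Sum.inl s :: γ' = γ'' := hω
        exact ⟨Sum.inl s :: γ, by simpa using GReach.block (γ := Sum.inl s :: γ) hβ trivial,
          .keep _ h⟩
      | cons e η => simp at hω
    | inr d =>
      obtain ⟨η', rfl, h'⟩ := block_split (θ := [d]) hγ hω
      have hd : EpsTr D (β ++ [d]) := by
        intro e he
        rcases List.mem_append.1 he with he | he
        · exact hβ e he
        · exact hη e (List.mem_append_left _ he)
      obtain ⟨γ₂, h₁, h₂⟩ := ih hd (fun e he => hη e (List.mem_append_right _ he)) h'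
      exact ⟨γ₂, by simpa using h₁, h₂⟩
  | @null s θ γ γ' he hr h ih =>
    obtain ⟨η', rfl, h'⟩ := block_split hγ hω
    obtain ⟨γ₂, h₁, h₂⟩ := ih (β := []) (fun e he => by simp at he)
      (fun e he => hη e (List.mem_append_right _ he)) h'
    exact ⟨γ₂, (GReach.block (γ := Sum.inl s :: γ) hβ trivial).trans ((hr.lift γ).trans h₁), h₂⟩

/-- A state at the head of an expansion is a kept letter, since nulling sequences are nonempty. -/
theorem NullExp.of_state_head {D : Set (Tr S A P)} {γ ω γ' : List (GSym S A P)} {s : S}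
    (h : NullExp D γ ω) (hω : ω = Sum.inl s :: γ') :
    ∃ γ₀, γ = Sum.inl s :: γ₀ ∧ NullExp D γ₀ γ' := by
  cases h with
  | nil => simp at hω
  | keep x h =>
    obtain ⟨rfl, rfl⟩ := List.cons.inj hω
    exact ⟨_, rfl, h⟩
  | null he hr h =>
    cases hr with
    | cons => simp at hω

theorem NullExp.step_back {D : Set (Tr S A P)} {γ γ' γ'' : List (GSym S A P)}
    {δ : List (Tr S A P)} (h : NullExp D γ γ') (hs : GStep D δ γ' γ'') :
    ∃ γ₂, GReach D δ γ γ₂ ∧ NullExp D γ₂ γ'' := by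
  cases hs with
  | shift hd =>
    obtain ⟨γ₀, rfl, h₀⟩ := h.of_state_head rfl
    exact ⟨_, (GStep.shift hd).reach, .keep _ h₀⟩
  | call hd =>
    obtain ⟨γ₀, rfl, h₀⟩ := h.of_state_head rfl
    exact ⟨_, (GStep.call hd).reach, .keep _ (.keep _ h₀)⟩
  | reduce hd =>
    obtain ⟨γ₀, rfl, h₀⟩ := h.of_state_head rfl
    exact ⟨_, (GStep.reduce hd).reach, h₀⟩
  | block _ hη hγ => exact h.block (β := []) (fun e he => by simp at he) hη hγ rfl

/-- **Track-back lemma:** if `γ' ∈ N(γ)` and `γ' →_δ γ'₂`, then there is `γ₂` with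
`γ →_δ γ₂` and `γ'₂ ∈ N(γ₂)`. -/
theorem track_back
    (S A P : Type) (D : Set (Tr S A P))
    (γ γ' γ'₂ : List (GSym S A P)) (δ : List (Tr S A P))
    (h1 : γ' ∈ NCloWord D γ) (h2 : GReach D δ γ' γ'₂) :
    ∃ γ₂ : List (GSym S A P), GReach D δ γ γ₂ ∧ γ'₂ ∈ NCloWord D γ₂ := by
  simp only [mem_nCloWord_iff] at h1 ⊢
  induction h2 generalizing γ with
  | nil => exact ⟨γ, .nil γ, h1⟩
  | step hs _ ih =>
    obtain ⟨γ₁, hr₁, he₁⟩ := h1.step_back hs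
    obtain ⟨γ₂, hr₂, he₂⟩ := ih γ₁ he₁
    exact ⟨γ₂, hr₁.trans hr₂, he₂⟩
end

section
/- Regularity of atomic closures: for every s, t, u ∈ S, (i) the singleton collection {({ε}, Φ_{s⇝u})} is a derivative of degree 1 of Φ_{s⇝ε} by u; and (ii) the collection {(Δ_{u,t,t'}, Φ_{s⇝t'})}_{t'∈S}, where Δ_{u,t,t'} = ⋃_{d=call⟨t',t'',u⟩∈D} Δ_{t''⇝t}·{d}, is a derivative of degree |S| of Φ_{s⇝t} by u. Consequently, for each s ∈ S the family {Φ_{s⇝ε}} ∪ {Φ_{s⇝t} : t ∈ S}, of at most |S|+1 relations, is closed under derivatives of degree |S|. -/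
variable {S A P : Type}

/-- Relations between configurations and (reversed) transition sequences. -/
abbrev SRel (S A P : Type) := Set (List S × List (Tr S A P))

/-- `Φ_{s⇝σ} = {(σ', rev η) : η ∈ D_ε*, s →_η σ·σ'}`. -/
def PhiRel (D : Set (Tr S A P)) (s : S) (σ : List S) : SRel S A P :=
  {p | ∃ η : List (Tr S A P), EpsSeq η ∧ Reach D η [s] (σ ++ p.1) ∧ p.2 = η.reverse}

/-- `Δ_{s⇝σ} = {rev η : η ∈ D_ε*, s →_η σ}`. -/
def DeltaRel (D : Set (Tr S A P)) (s : S) (σ : List S) : Set (List (Tr S A P)) :=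
  {ρ | ∃ η : List (Tr S A P), EpsSeq η ∧ Reach D η [s] σ ∧ ρ = η.reverse}

/-- The indexed collection `{(ΔC i, ΦC i)}` is a derivative of `Φ` by `u`:
`(u·σ, ρ) ∈ Φ ↔ ρ = ρ₂·ρ₁ with ρ₂ ∈ ΔC i and (σ, ρ₁) ∈ ΦC i for some i`. -/
def IsDeriv {I : Type} (Φ : SRel S A P) (u : S)
    (ΔC : I → Set (List (Tr S A P))) (ΦC : I → SRel S A P) : Prop :=
  ∀ (σ : List S) (ρ : List (Tr S A P)),
    (u :: σ, ρ) ∈ Φ ↔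
      ∃ (i : I) (ρ₂ ρ₁ : List (Tr S A P)), ρ₂ ∈ ΔC i ∧ (σ, ρ₁) ∈ ΦC i ∧ ρ = ρ₂ ++ ρ₁

/-- The family `{Φ_{s⇝ε}} ∪ {Φ_{s⇝t} : t ∈ S}`. -/
def AtomFam (D : Set (Tr S A P)) (s : S) : Set (SRel S A P) :=
  {PhiRel D s []} ∪ {Φ | ∃ t : S, Φ = PhiRel D s [t]}

theorem Step.append {d : Tr S A P} {σ σ' : List S} (h : Step d σ σ') (τ : List S) :
    Step d (σ ++ τ) (σ' ++ τ) := by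
  cases h <;> constructor

theorem Reach.append {D : Set (Tr S A P)} {η : List (Tr S A P)} {σ σ' : List S}
    (h : Reach D η σ σ') (τ : List S) : Reach D η (σ ++ τ) (σ' ++ τ) := by
  induction h with
  | nil σ => exact .nil _
  | cons hd hs _ ih => exact .cons hd (hs.append τ) ih

theorem Reach.trans {D : Set (Tr S A P)} {η₁ η₂ : List (Tr S A P)} {σ σ' σ'' : List S}
    (h₁ : Reach D η₁ σ σ') (h₂ : Reach D η₂ σ' σ'') : Reach D (η₁ ++ η₂) σ σ'' := by
  induction h₁ with
  | nil σ => exact h₂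
  | cons hd hs _ ih => exact .cons hd hs (ih h₂)

/-- A run ending in `t :: u :: σ` either keeps `u :: σ` strictly below the top of the stack
throughout, or splits at the last call that pushes this `u` onto `σ`. -/
theorem Reach.last_call {D : Set (Tr S A P)} {t u : S} {σ : List S}
    {η : List (Tr S A P)} {τ υ : List S} (h : Reach D η τ υ) (hυ : υ = t :: u :: σ) :
    (∃ x τ', τ = x :: (τ' ++ u :: σ) ∧ Reach D η (x :: τ') [t]) ∨
    ∃ η₁ η₂ t' t'', η = η₁ ++ Tr.call t' t'' u :: η₂ ∧ Tr.call t' t'' u ∈ D ∧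
      Reach D η₁ τ (t' :: σ) ∧ Reach D η₂ [t''] [t] := by
  induction h with
  | nil τ => exact .inl ⟨t, [], hυ, .nil _⟩
  | cons hd hs _ ih =>
    rcases ih hυ with ⟨x, τ', hτ, hr⟩ | ⟨η₁, η₂, t', t'', rfl, hc, h₁, h₂⟩
    · cases hs with
      | shift s a t =>
        obtain ⟨rfl, rfl⟩ := List.cons.inj hτ
        exact .inl ⟨s, τ', rfl, .cons hd (.shift ..) hr⟩
      | call s v w ρ =>
        obtain ⟨rfl, hρ⟩ := List.cons.inj hτ
        -- Either this call pushes `u` itself, or it acts strictly above `u :: σ`.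
        cases τ' with
        | nil =>
          obtain ⟨rfl, rfl⟩ := List.cons.inj hρ
          exact .inr ⟨[], _, s, v, rfl, hd, .nil _, hr⟩
        | cons y τ' =>
          obtain ⟨rfl, rfl⟩ := List.cons.inj hρ
          exact .inl ⟨s, τ', rfl, .cons hd (.call ..) hr⟩
      | reduce s p =>
        subst hτ
        exact .inl ⟨s, x :: τ', rfl, .cons hd (.reduce ..) hr⟩
    · exact .inr ⟨_ :: η₁, η₂, t', t'', rfl, hc, .cons hd hs h₁, h₂⟩

theorem isDeriv_phiRel_nil (D : Set (Tr S A P)) (s u : S) :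
    IsDeriv (PhiRel D s []) u
      (fun _ : Unit => ({[]} : Set (List (Tr S A P))))
      (fun _ : Unit => PhiRel D s [u]) := by
  intro σ ρ
  constructor
  · intro h
    exact ⟨(), [], ρ, rfl, h, rfl⟩
  · rintro ⟨_, _, ρ₁, rfl, h, rfl⟩
    exact h

theorem isDeriv_phiRel_singleton (D : Set (Tr S A P)) (s t u : S) :
    IsDeriv (PhiRel D s [t]) u
      (fun t' : S => {ρ | ∃ (t'' : S) (ρ' : List (Tr S A P)),
        Tr.call t' t'' u ∈ D ∧ ρ' ∈ DeltaRel D t'' [t] ∧ ρ = ρ' ++ [Tr.call t' t'' u]})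
      (fun t' : S => PhiRel D s [t']) := by
  intro σ ρ
  constructor
  · rintro ⟨η, hη, hr, hρ⟩
    dsimp only at hρ
    rcases hr.last_call rfl with ⟨x, τ', hτ, -⟩ | ⟨η₁, η₂, t', t'', rfl, hc, h₁, h₂⟩
    · simp at hτ
    · refine ⟨t', η₂.reverse ++ [Tr.call t' t'' u], η₁.reverse,
        ⟨t'', _, hc, ⟨η₂, ?_, h₂, rfl⟩, rfl⟩, ⟨η₁, ?_, h₁, rfl⟩, by simp [hρ]⟩
      · exact fun d hd => hη d (by simp [hd])
      · exact fun d hd => hη d (by simp [hd])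
  · rintro ⟨t', _, _, ⟨t'', _, hc, ⟨η₂, hη₂, h₂, rfl⟩, rfl⟩, ⟨η₁, hη₁, h₁, h⟩, rfl⟩
    dsimp only at h
    subst h
    refine ⟨η₁ ++ Tr.call t' t'' u :: η₂, ?_, ?_, by simp⟩
    · intro d hd
      rcases List.mem_append.1 hd with hd | hd
      · exact hη₁ d hd
      · rcases List.mem_cons.1 hd with rfl | hd
        · exact id
        · exact hη₂ d hd
    · exact h₁.trans (.cons hc (.call ..) (h₂.append (u :: σ)))


/-- **Regularity of atomic closures:** (i) `{({ε}, Φ_{s⇝u})}` is a derivative of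
degree 1 of `Φ_{s⇝ε}` by `u`; (ii) `{(Δ_{u,t,t'}, Φ_{s⇝t'})}_{t'∈S}` with
`Δ_{u,t,t'} = ⋃_{call⟨t',t'',u⟩∈D} Δ_{t''⇝t}·{call⟨t',t'',u⟩}` is a derivative of
degree `|S|` of `Φ_{s⇝t}` by `u`; consequently (iii) the family
`{Φ_{s⇝ε}} ∪ {Φ_{s⇝t} : t ∈ S}` is closed under derivatives of degree `|S|`. -/
theorem atomic_closures_regular
    (S A P : Type) (D : Set (Tr S A P)) :
    (∀ s u : S,
      IsDeriv (PhiRel D s []) u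
        (fun _ : Unit => ({[]} : Set (List (Tr S A P))))
        (fun _ : Unit => PhiRel D s [u])) ∧
    (∀ s t u : S,
      IsDeriv (PhiRel D s [t]) u
        (fun t' : S => {ρ | ∃ (t'' : S) (ρ' : List (Tr S A P)),
          Tr.call t' t'' u ∈ D ∧ ρ' ∈ DeltaRel D t'' [t] ∧ ρ = ρ' ++ [Tr.call t' t'' u]})
        (fun t' : S => PhiRel D s [t'])) ∧
    (∀ s : S, ∀ Φ ∈ AtomFam D s, ∀ u : S,
      ∃ (ΔC : S → Set (List (Tr S A P))) (ΦC : S → SRel S A P),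
        (∀ i : S, ΦC i ∈ AtomFam D s) ∧ IsDeriv Φ u ΔC ΦC) := by
  refine ⟨isDeriv_phiRel_nil D, isDeriv_phiRel_singleton D, ?_⟩
  rintro s Φ (rfl | ⟨t, rfl⟩) u
  · -- Only the index `u` contributes; every other `Δ` is empty.
    refine ⟨fun i => {ρ | i = u ∧ ρ = []}, fun i => PhiRel D s [i], fun i => .inr ⟨i, rfl⟩, ?_⟩
    intro σ ρ
    rw [isDeriv_phiRel_nil D s u σ ρ]
    constructor
    · rintro ⟨_, ρ₂, ρ₁, h₂, h₁, h⟩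
      exact ⟨u, ρ₂, ρ₁, ⟨rfl, h₂⟩, h₁, h⟩
    · rintro ⟨_, ρ₂, ρ₁, ⟨rfl, h₂⟩, h₁, h⟩
      exact ⟨(), ρ₂, ρ₁, h₂, h₁, h⟩
  · exact ⟨_, _, fun i => .inr ⟨i, rfl⟩, isDeriv_phiRel_singleton D s t u⟩
end
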